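/- Let e be an execution of a program P ending in state s, let a be a map variable, let j be an index value, and suppose lastwrite(a, j, e) = w ≠ ⊥ where w is the map-write statement b:=b[i:=x]. Then w occurs as some statement σ_k of e, the state s_k in which σ_k is executed satisfies s_k(i) = j, and the value of a at index j in the final state satisfies s(a)(j) = s_k(x). -/

import Mathlib

open scoped Classical

namespace IVL

/-- Expressions of base type: literals, base variables, and map reads `a[i]`. -/
inductive BExpr (V BVar MVar : Type) : Type where
  | lit  : V → BExpr V BVar MVar
  | var  : BVar → BExpr V BVar MVar
  | read : MVar → BVar → BExpr V BVar MVar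

/-- Boolean expressions: equalities of base variables, closed under ¬, ∧, ∨. -/
inductive BoolExpr (BVar : Type) : Type where
  | eq  : BVar → BVar → BoolExpr BVar
  | not : BoolExpr BVar → BoolExpr BVar
  | and : BoolExpr BVar → BoolExpr BVar → BoolExpr BVar
  | or  : BoolExpr BVar → BoolExpr BVar → BoolExpr BVar

/-- Commands. -/
inductive Cmd (V BVar MVar : Type) : Type where
  | assign    : BVar → BExpr V BVar MVar → Cmd V BVar MVar      -- x := e
  | assignMap : MVar → MVar → Cmd V BVar MVar                   -- a := b
  | store     : MVar → BVar → BVar → Cmd V BVar MVar            -- a := a[i := x]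
  | constMap  : MVar → V → Cmd V BVar MVar                      -- a := const(lit)
  | havoc     : BVar → Cmd V BVar MVar                          -- havoc x
  | havocMap  : MVar → Cmd V BVar MVar                          -- havoc a
  | assume    : BoolExpr BVar → Cmd V BVar MVar                 -- assume e

/-- A statement is a triple (source location, command, target location). -/
abbrev Stmt (V BVar MVar Loc : Type) : Type := Loc × Cmd V BVar MVar × Loc

/-- A program: a control-flow graph with statements as edges and an initial
location with no incoming edges. -/
structure Program (V BVar MVar Loc : Type) : Type where
  stmts : Set (Stmt V BVar MVar Loc)
  init : Loc
  no_incoming : ∀ σ ∈ stmts, σ.2.2 ≠ init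

/-- A state: a program counter, a valuation of base variables, a valuation of
map variables. -/
structure PState (V BVar MVar Loc : Type) : Type where
  pc : Loc
  base : BVar → V
  mapv : MVar → V → V

variable {V BVar MVar Loc : Type}

def evalBoolOn (b : BVar → V) : BoolExpr BVar → Prop
  | .eq x y => b x = b y
  | .not e => ¬ evalBoolOn b e
  | .and e1 e2 => evalBoolOn b e1 ∧ evalBoolOn b e2
  | .or e1 e2 => evalBoolOn b e1 ∨ evalBoolOn b e2

def evalB (s : PState V BVar MVar Loc) : BExpr V BVar MVar → V
  | .lit v => v
  | .var x => s.base x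
  | .read a i => s.mapv a (s.base i)

/-- Strongest-postcondition semantics of a single statement, as a relation
between a pre-state and a post-state. -/
def post (σ : Stmt V BVar MVar Loc) (s s' : PState V BVar MVar Loc) : Prop :=
  s.pc = σ.1 ∧ s'.pc = σ.2.2 ∧
  match σ.2.1 with
  | .assign x e => s'.base = Function.update s.base x (evalB s e) ∧ s'.mapv = s.mapv
  | .assignMap a b => s'.base = s.base ∧ s'.mapv = Function.update s.mapv a (s.mapv b)
  | .store a i x => s'.base = s.base ∧
      s'.mapv = Function.update s.mapv a (Function.update (s.mapv a) (s.base i) (s.base x))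
  | .constMap a v => s'.base = s.base ∧ s'.mapv = Function.update s.mapv a (fun _ => v)
  | .havoc x => (∃ v, s'.base = Function.update s.base x v) ∧ s'.mapv = s.mapv
  | .havocMap a => s'.base = s.base ∧ ∃ m, s'.mapv = Function.update s.mapv a m
  | .assume e => evalBoolOn s.base e ∧ s'.base = s.base ∧ s'.mapv = s.mapv

/-- Executions of a program `P`, indexed by their final state. -/
inductive Exec (P : Program V BVar MVar Loc) : PState V BVar MVar Loc → Type where
  | init : ∀ s : PState V BVar MVar Loc, s.pc = P.init → Exec P s
  | step : ∀ {s : PState V BVar MVar Loc}, Exec P s → ∀ σ : Stmt V BVar MVar Loc,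
      σ ∈ P.stmts → ∀ s' : PState V BVar MVar Loc, post σ s s' → Exec P s'

/-- Reachable states: states in which some execution ends. -/
def Reach (P : Program V BVar MVar Loc) : Set (PState V BVar MVar Loc) :=
  {s | Nonempty (Exec P s)}

/-- The final state of an execution (= the state in which the next statement
would be executed). -/
def preOf {P : Program V BVar MVar Loc} {s : PState V BVar MVar Loc}
    (_ : Exec P s) : PState V BVar MVar Loc := s

/-- `lastwrite a j e` traces back, within the execution `e`, the map write
statement responsible for the value of map `a` at index `j` in the final
state of `e` (`none` represents the symbol ⊥). -/
noncomputable def lastwrite {P : Program V BVar MVar Loc} (a : MVar) (j : V) :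
    {s : PState V BVar MVar Loc} → Exec P s → Option (Stmt V BVar MVar Loc)
  | _, .init _ _ => none
  | _, .step e σ _ s' _ =>
    match σ with
    | (_, Cmd.havocMap b, _) => if b = a then none else lastwrite a j e
    | (_, Cmd.constMap b _, _) => if b = a then none else lastwrite a j e
    | (_, Cmd.store b i _, _) =>
        if b = a then (if s'.base i = j then some σ else lastwrite a j e)
        else lastwrite a j e
    | (_, Cmd.assignMap b c, _) => if b = a then lastwrite c j e else lastwrite a j e
    | _ => lastwrite a j e

def IsWrite (σ : Stmt V BVar MVar Loc) : Prop := ∃ a i x, σ.2.1 = Cmd.store a i x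

def IsRead (σ : Stmt V BVar MVar Loc) : Prop :=
  ∃ x a i, σ.2.1 = Cmd.assign x (BExpr.read a i)

def WriteStmts (P : Program V BVar MVar Loc) : Set (Stmt V BVar MVar Loc) :=
  {σ | σ ∈ P.stmts ∧ IsWrite σ}

def ReadStmts (P : Program V BVar MVar Loc) : Set (Stmt V BVar MVar Loc) :=
  {σ | σ ∈ P.stmts ∧ IsRead σ}

/-- The Last Writes relation of `P`: `(w, rd)` is in it iff `rd` is a read
statement `(ℓ, x:=a[i], ℓ')` of `P` and some execution ends in a state `s`
with `s(pc) = ℓ` and `lastwrite(a, s(i), e) = w ≠ ⊥`. -/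
def lastwrites (P : Program V BVar MVar Loc) (w rd : Stmt V BVar MVar Loc) : Prop :=
  rd ∈ P.stmts ∧
  ∃ x a i, rd.2.1 = Cmd.assign x (BExpr.read a i) ∧
    ∃ s : PState V BVar MVar Loc, ∃ e : Exec P s,
      s.pc = rd.1 ∧ lastwrite a (s.base i) e = some w

/-! ### The instrumented program `P_pre` -/

/-- Ghost valuation: for each map variable `a`, the ghost map `a-lw`, whose
values are write statements or ⊥ (`none`). -/
abbrev Ghost (V BVar MVar Loc : Type) : Type := MVar → V → Option (Stmt V BVar MVar Loc)

/-- The (deterministic) effect of the ghost code added by the instrumentation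
to the statement `σ`, given the post-state `s'` of the original statement. -/
noncomputable def ghostStep (P : Program V BVar MVar Loc) (σ : Stmt V BVar MVar Loc)
    (s' : PState V BVar MVar Loc) (g : Ghost V BVar MVar Loc) : Ghost V BVar MVar Loc :=
  if σ.1 = P.init then fun _ _ => none
  else
    match σ with
    | (_, Cmd.store a i _, _) =>
        Function.update g a (Function.update (g a) (s'.base i) (some σ))
    | (_, Cmd.havocMap a, _) => Function.update g a (fun _ => none)
    | (_, Cmd.constMap a _, _) => Function.update g a (fun _ => none)
    | (_, Cmd.assignMap a b, _) => Function.update g a (g b)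
    | _ => g

/-- Post relation of the instrumented statement `ι(σ)` of `P_pre`, on states
extended with the ghost maps. -/
def postPre (P : Program V BVar MVar Loc) (σ : Stmt V BVar MVar Loc)
    (t t' : PState V BVar MVar Loc × Ghost V BVar MVar Loc) : Prop :=
  post σ t.1 t'.1 ∧ t'.2 = ghostStep P σ t'.1 t.2

/-- Initial states of the instrumented program (ghost maps hold ⊥ everywhere). -/
def InitPre (P : Program V BVar MVar Loc) :
    Set (PState V BVar MVar Loc × Ghost V BVar MVar Loc) :=
  {t | t.1.pc = P.init ∧ t.2 = fun _ _ => none}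

/-- Executions of the instrumented program `P_pre`. -/
inductive ExecPre (P : Program V BVar MVar Loc) :
    PState V BVar MVar Loc × Ghost V BVar MVar Loc → Type where
  | init : ∀ t, t ∈ InitPre P → ExecPre P t
  | step : ∀ {t}, ExecPre P t → ∀ σ : Stmt V BVar MVar Loc, σ ∈ P.stmts →
      ∀ t', postPre P σ t t' → ExecPre P t'

/-- Reachable states of the instrumented program `P_pre`. -/
def ReachPre (P : Program V BVar MVar Loc) :
    Set (PState V BVar MVar Loc × Ghost V BVar MVar Loc) :=
  {t | Nonempty (ExecPre P t)}

/-- Erasing the ghost assignments from an execution of `P_pre` yields an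
execution of `P`. -/
def ExecPre.proj {P : Program V BVar MVar Loc} :
    {t : PState V BVar MVar Loc × Ghost V BVar MVar Loc} → ExecPre P t → Exec P t.1
  | _, .init t h => Exec.init t.1 h.1
  | _, .step e σ hσ t' h => Exec.step (ExecPre.proj e) σ hσ t'.1 h.1

/-! ### Bisimulation -/

/-- `B` is a bisimulation between two transition systems whose transitions are
indexed by the statements of `P` (via the statement correspondence). -/
def IsBisim {S1 S2 A : Type} (stmts : Set A)
    (post1 : A → S1 → S1 → Prop) (post2 : A → S2 → S2 → Prop)
    (B : S1 → S2 → Prop) : Prop :=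
  ∀ s t, B s t → ∀ σ ∈ stmts,
    (∀ s', post1 σ s s' → ∃ t', post2 σ t t' ∧ B s' t') ∧
    (∀ t', post2 σ t t' → ∃ s', post1 σ s s' ∧ B s' t')

/-- Bisimulation equivalence (with designated sets of initial states). -/
def BisimEquiv {S1 S2 A : Type} (stmts : Set A)
    (post1 : A → S1 → S1 → Prop) (post2 : A → S2 → S2 → Prop)
    (init1 : Set S1) (init2 : Set S2) : Prop :=
  ∃ B, IsBisim stmts post1 post2 B ∧
    (∀ s ∈ init1, ∃ t ∈ init2, B s t) ∧
    (∀ t ∈ init2, ∃ s ∈ init1, B s t)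

/-! ### The transformed program `P'` -/

/-- `R` relates two writes iff some read is `L`-related to both. -/
def Rrel (L : Stmt V BVar MVar Loc → Stmt V BVar MVar Loc → Prop)
    (w w' : Stmt V BVar MVar Loc) : Prop :=
  ∃ rd, L w rd ∧ L w' rd

/-- The block (equivalence class of the equivalence closure of `Rrel L`,
within the write statements of `P`) of the write `w`, as a set of
`Option`-statements (`some` of the writes in the class). -/
def blockOf (P : Program V BVar MVar Loc)
    (L : Stmt V BVar MVar Loc → Stmt V BVar MVar Loc → Prop)
    (w : Stmt V BVar MVar Loc) : Set (Option (Stmt V BVar MVar Loc)) :=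
  {o | ∃ w', w' ∈ WriteStmts P ∧ Relation.EqvGen (Rrel L) w w' ∧ o = some w'}

/-- The blocks of the partition: the equivalence classes of writes of `P`,
plus the extra singleton block `{⊥}`. -/
def Writeblocks (P : Program V BVar MVar Loc)
    (L : Stmt V BVar MVar Loc → Stmt V BVar MVar Loc → Prop) :
    Set (Set (Option (Stmt V BVar MVar Loc))) :=
  {C | ∃ w ∈ WriteStmts P, C = blockOf P L w} ∪ {{none}}

/-- A state of the transformed program `P'`: each map variable `a` of `P` is
split into variables `a_W`, one for each block `W`. -/
structure TState (V BVar MVar Loc : Type) : Type where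
  pc : Loc
  base : BVar → V
  mapv : MVar → Set (Option (Stmt V BVar MVar Loc)) → V → V

/-- Post relation of the transformed statement `τ(σ)` of `P'`. -/
def postTrans (P : Program V BVar MVar Loc)
    (L : Stmt V BVar MVar Loc → Stmt V BVar MVar Loc → Prop)
    (σ : Stmt V BVar MVar Loc) (t t' : TState V BVar MVar Loc) : Prop :=
  t.pc = σ.1 ∧ t'.pc = σ.2.2 ∧
  match σ.2.1 with
  | Cmd.assign x (BExpr.read a i) =>
      t'.mapv = t.mapv ∧
      ∃ W, (((∀ w, ¬ L w σ) ∧ W = {none}) ∨ (∃ w, L w σ ∧ W = blockOf P L w)) ∧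
        t'.base = Function.update t.base x (t.mapv a W (t.base i))
  | Cmd.assign x (BExpr.lit v) =>
      t'.mapv = t.mapv ∧ t'.base = Function.update t.base x v
  | Cmd.assign x (BExpr.var y) =>
      t'.mapv = t.mapv ∧ t'.base = Function.update t.base x (t.base y)
  | Cmd.assignMap a b => t'.base = t.base ∧
      t'.mapv = Function.update t.mapv a (t.mapv b)
  | Cmd.store a i x => t'.base = t.base ∧
      t'.mapv = Function.update t.mapv a
        (Function.update (t.mapv a) (blockOf P L σ)
          (Function.update (t.mapv a (blockOf P L σ)) (t.base i) (t.base x)))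
  | Cmd.constMap a v => t'.base = t.base ∧
      t'.mapv = Function.update t.mapv a (fun _ _ => v)
  | Cmd.havoc x => (∃ v, t'.base = Function.update t.base x v) ∧ t'.mapv = t.mapv
  | Cmd.havocMap a => t'.base = t.base ∧ (∀ b, b ≠ a → t'.mapv b = t.mapv b) ∧
      ∀ W ∈ Writeblocks P L, ∀ W' ∈ Writeblocks P L, t'.mapv a W = t'.mapv a W'
  | Cmd.assume e => evalBoolOn t.base e ∧ t'.base = t.base ∧ t'.mapv = t.mapv


/-- `OccursIn e τ u` : the statement `τ` occurs as some statement `σ_k` of the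
execution `e`, and `u` is the state `s_k` in which it is executed. -/
def OccursIn {P : Program V BVar MVar Loc} :
    {s : PState V BVar MVar Loc} → Exec P s → Stmt V BVar MVar Loc →
      PState V BVar MVar Loc → Prop
  | _, .init _ _, _, _ => False
  | _, .step e σ _ _ _, τ, u => (τ = σ ∧ u = preOf e) ∨ OccursIn e τ u

/-- Let `e` be an execution of `P` ending in state `s`, let `a`
be a map variable and `j` an index value, and suppose
`lastwrite(a, j, e) = w ≠ ⊥` where `w` is the map-write statement
`(ℓ, b:=b[i:=x], ℓ')`.  Then `w` occurs as some statement of `e`, the state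
`sk` in which it is executed satisfies `sk(i) = j`, and the value of `a` at
index `j` in the final state satisfies `s(a)(j) = sk(x)`. -/
theorem lastwrite_occurs_and_writes_value
    (P : Program V BVar MVar Loc)
    {s : PState V BVar MVar Loc} (e : Exec P s) (a : MVar) (j : V)
    (w : Stmt V BVar MVar Loc) (hw : lastwrite a j e = some w)
    (ℓ ℓ' : Loc) (b : MVar) (i x : BVar)
    (hform : w = (ℓ, Cmd.store b i x, ℓ')) :
    ∃ sk : PState V BVar MVar Loc,
      OccursIn e w sk ∧ sk.base i = j ∧ s.mapv a j = sk.base x := by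
  subst hform
  induction e generalizing a with
  | init s hs => simp [lastwrite] at hw
  | @step s e σ hσ s' hpost ih =>
    -- it suffices to trace the write to some map `c` of the prefix with the same value at `j`
    have lift : ∀ c, lastwrite c j e = some (ℓ, Cmd.store b i x, ℓ') →
        s'.mapv a j = s.mapv c j →
        ∃ sk, OccursIn (Exec.step e σ hσ s' hpost) (ℓ, Cmd.store b i x, ℓ') sk ∧
          sk.base i = j ∧ s'.mapv a j = sk.base x := by
      intro c hc hval
      obtain ⟨sk, hocc, hi, hx⟩ := ih c hc
      exact ⟨sk, Or.inr hocc, hi, hval.trans hx⟩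
    obtain ⟨l, c, l'⟩ := σ
    obtain ⟨-, -, hsem⟩ := id hpost
    cases c with
    | assign y r => exact lift a hw (by rw [hsem.2])
    | havoc y => exact lift a hw (by rw [hsem.2])
    | assume r => exact lift a hw (by rw [hsem.2.2])
    | assignMap c d =>
      by_cases hca : c = a
      · subst hca
        exact lift d (by simpa [lastwrite] using hw) (by simp [hsem.2])
      · exact lift a (by simpa [lastwrite, hca] using hw)
          (by simp [hsem.2, Function.update_of_ne (Ne.symm hca)])
    | constMap c v =>
      by_cases hca : c = a
      · simp [lastwrite, hca] at hw
      · exact lift a (by simpa [lastwrite, hca] using hw)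
          (by simp [hsem.2, Function.update_of_ne (Ne.symm hca)])
    | havocMap c =>
      by_cases hca : c = a
      · simp [lastwrite, hca] at hw
      · obtain ⟨-, m, hm⟩ := hsem
        exact lift a (by simpa [lastwrite, hca] using hw)
          (by simp [hm, Function.update_of_ne (Ne.symm hca)])
    | store c k y =>
      by_cases hca : c = a
      · subst hca
        by_cases hk : s'.base k = j
        · have heq : ((l, Cmd.store c k y, l') : Stmt V BVar MVar Loc) =
              (ℓ, Cmd.store b i x, ℓ') := by
            simpa [lastwrite, hk] using hw
          cases heq
          rw [hsem.1] at hk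
          exact ⟨s, Or.inl ⟨rfl, rfl⟩, hk, by simp [hsem.2, hk]⟩
        · have hne : j ≠ s.base k := by
            rw [hsem.1] at hk
            exact Ne.symm hk
          exact lift c (by simpa [lastwrite, hk] using hw)
            (by simp [hsem.2, Function.update_of_ne hne])
      · exact lift a (by simpa [lastwrite, hca] using hw)
          (by simp [hsem.2, Function.update_of_ne (Ne.symm hca)])

end IVL
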